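/- Let (C, ⊗, I) be a monoidal category and let C, D be objects of C such that C ⊗ D is a semisimple object. If C has a strong left dual (i.e. there exists an object C* and a split monomorphism i_C : I → C* ⊗ C) and the functor C ⊗ − : C → C preserves monomorphisms, then D is a semisimple object of C. -/

import Mathlib

open CategoryTheory MonoidalCategory

/-- An object `X` of a category is *semisimple* if every monomorphism into `X` is a
split monomorphism. -/
def IsSemisimpleObj {C : Type*} [Category C] (X : C) : Prop :=
  ∀ ⦃Z : C⦄ (f : Z ⟶ X), Mono f → IsSplitMono f

/-!
A split mono `i : 𝟙_ C ⟶ X' ⊗ X` induces split monos `η_Z : Z ⟶ X' ⊗ (X ⊗ Z)`, natural in `Z`.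
For a mono `f : Z ⟶ Y`, the map `X ◁ f` is a mono into a semisimple object, hence split. By
naturality `f ≫ η_Y = η_Z ≫ X' ◁ (X ◁ f)`, a composite of split monos, so `f` is split.
-/

universe v₁ v₂ u₁ u₂

section SplitMono

variable {C : Type u₁} [Category.{v₁} C] {X Y Z : C}

lemma isSplitMono_comp (f : X ⟶ Y) (g : Y ⟶ Z) [IsSplitMono f] [IsSplitMono g] :
    IsSplitMono (f ≫ g) :=
  .mk' { retraction := retraction g ≫ retraction f }

lemma isSplitMono_of_isSplitMono_comp (f : X ⟶ Y) (g : Y ⟶ Z) [IsSplitMono (f ≫ g)] :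
    IsSplitMono f :=
  .mk' { retraction := g ≫ retraction (f ≫ g), id := by rw [← Category.assoc, IsSplitMono.id] }

end SplitMono

section Functor

variable {C : Type u₁} [Category.{v₁} C] {D : Type u₂} [Category.{v₂} D] {F : C ⥤ D} {G : D ⥤ C}

lemma isSplitMono_of_isSplitMono_map (η : 𝟭 C ⟶ F ⋙ G) {Y Z : C} (f : Z ⟶ Y)
    [IsSplitMono (η.app Z)] [IsSplitMono (F.map f)] : IsSplitMono f := by
  have naturality : f ≫ η.app Y = η.app Z ≫ G.map (F.map f) := η.naturality f
  have : IsSplitMono (f ≫ η.app Y) := naturality ▸ isSplitMono_comp _ _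
  exact isSplitMono_of_isSplitMono_comp f (η.app Y)

lemma IsSemisimpleObj.of_obj [F.PreservesMonomorphisms] (η : 𝟭 C ⟶ F ⋙ G)
    [∀ Z, IsSplitMono (η.app Z)] {Y : C} (hY : IsSemisimpleObj (F.obj Y)) :
    IsSemisimpleObj Y := fun _ f _ ↦
  have : IsSplitMono (F.map f) := hY (F.map f) inferInstance
  isSplitMono_of_isSplitMono_map η f

end Functor

section Monoidal

variable {C : Type u₁} [Category.{v₁} C] [MonoidalCategory C] {X X' : C}

/-- The natural transformation `Y ⟶ X' ⊗ (X ⊗ Y)` induced by `i : 𝟙_ C ⟶ X' ⊗ X`. It plays the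
role of the unit of an adjunction `X ⊗ - ⊣ X' ⊗ -`, although `i` need not come from a duality. -/
def tensorLeftUnit (i : 𝟙_ C ⟶ X' ⊗ X) : 𝟭 C ⟶ tensorLeft X ⋙ tensorLeft X' :=
  (leftUnitorNatIso C).inv ≫ (curriedTensor C).map i ≫ (tensorLeftTensor X' X).hom

instance isSplitMono_tensorLeftUnit_app (i : 𝟙_ C ⟶ X' ⊗ X) [IsSplitMono i] (Y : C) :
    IsSplitMono ((tensorLeftUnit i).app Y) :=
  have : IsSplitMono (i ▷ Y) := inferInstanceAs (IsSplitMono ((tensorRight Y).map i))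
  have : IsSplitMono (i ▷ Y ≫ (α_ X' X Y).hom) := isSplitMono_comp _ _
  isSplitMono_comp (λ_ Y).inv (i ▷ Y ≫ (α_ X' X Y).hom)

end Monoidal

/-- **Serre theorem, part 2.** Let `(C, ⊗, I)` be a monoidal category and `X`, `Y` objects
such that `X ⊗ Y` is semisimple.  If `X` has a strong left dual (an object `X'` together
with a split mono `I ⟶ X' ⊗ X`) and the functor `X ⊗ -` preserves monomorphisms, then `Y`
is semisimple. -/
theorem serre_right_of_strong_left_dual {C : Type*} [Category C] [MonoidalCategory C]
    (X Y : C) (hss : IsSemisimpleObj (X ⊗ Y))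
    (hdual : ∃ (X' : C) (i : 𝟙_ C ⟶ X' ⊗ X), IsSplitMono i)
    (hmono : ∀ ⦃A B : C⦄ (f : A ⟶ B), Mono f → Mono (X ◁ f)) :
    IsSemisimpleObj Y := by
  obtain ⟨X', i, _⟩ := hdual
  have : (tensorLeft X).PreservesMonomorphisms := ⟨fun f hf ↦ hmono f hf⟩
  exact .of_obj (tensorLeftUnit i) hss
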